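/- arXiv:math/0703066 — 2 statements merged into one kernel-verified Lean document; each statement's English description precedes it below -/
import Mathlib

section
/- The dicyclic group of order 12, D_{4,3,-1} = ⟨x, y | x⁴ = y³ = 1, x y x⁻¹ = y⁻¹⟩, is not (1 | 2,2)-generated; that is, there do not exist elements ℓ₁, ℓ₂, h₁, h₂ in this group with ℓ₁ and ℓ₂ of order 2, ℓ₁ℓ₂ · h₁h₂h₁⁻¹h₂⁻¹ = 1, and {ℓ₁, ℓ₂, h₁, h₂} generating the group. -/
/-!
If a group has at most one involution `l`, then `l` is central, being fixed by conjugation, and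
the relation `l * l * ⁅h₁, h₂⁆ = 1` says that `h₁` and `h₂` commute. So if such a group is
`(1 | 2,2)`-generated, then it is commutative. For `2 ≤ n`, the dicyclic group of order `4 * n`
has the single involution `a n` and is not commutative.
-/

section Group

variable {G : Type*} [Group G]

theorem isMulCommutative_of_closure_eq_top {s : Set G} (hs : Subgroup.closure s = ⊤)
    (hcomm : ∀ x ∈ s, ∀ y ∈ s, x * y = y * x) : IsMulCommutative G := by
  have hcenter : Subgroup.centralizer s = Subgroup.center G := by
    rw [← Subgroup.centralizer_closure, hs, Subgroup.coe_top, Subgroup.centralizer_univ]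
  have hle : Subgroup.closure s ≤ Subgroup.centralizer s :=
    (Subgroup.closure_le _).mpr fun x hx y hy ↦ hcomm y hy x hx
  rw [hs, hcenter] at hle
  exact Subgroup.center_eq_top_iff.mp (top_le_iff.mp hle)

theorem mem_center_of_forall_orderOf_eq {x : G} (hx : ∀ y, orderOf y = orderOf x → y = x) :
    x ∈ Subgroup.center G := by
  refine Subgroup.mem_center_iff.mpr fun g ↦ ?_
  have hconj : SemiconjBy g x (g * x * g⁻¹) := SemiconjBy.conj_mk g x
  exact mul_inv_eq_iff_eq_mul.mp (hx _ (hconj.orderOf_eq g).symm)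

variable (G) in
/-- `(1 | 2,2)`-generation of a group: it is generated by two involutions `l₁`, `l₂` and two
further elements `h₁`, `h₂` such that `l₁ * l₂` times the commutator of `h₁` and `h₂` is trivial. -/
def IsOneTwoTwoGenerated : Prop :=
  ∃ l₁ l₂ h₁ h₂ : G,
    orderOf l₁ = 2 ∧ orderOf l₂ = 2 ∧
    l₁ * l₂ * (h₁ * h₂ * h₁⁻¹ * h₂⁻¹) = 1 ∧
    Subgroup.closure ({l₁, l₂, h₁, h₂} : Set G) = ⊤

theorem IsOneTwoTwoGenerated.isMulCommutative (hG : IsOneTwoTwoGenerated G)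
    (hinv : ∀ x y : G, orderOf x = 2 → orderOf y = 2 → x = y) : IsMulCommutative G := by
  obtain ⟨l, l', h₁, h₂, hl, hl', hrel, hgen⟩ := hG
  obtain rfl : l = l' := hinv l l' hl hl'
  have hcentral : ∀ g, g * l = l * g :=
    Subgroup.mem_center_iff.mp <|
      mem_center_of_forall_orderOf_eq fun y hy ↦ hinv y l (hy.trans hl) hl
  have hcomm : h₁ * h₂ = h₂ * h₁ := by
    have hsq : l * l = 1 := by rw [← pow_two, ← hl, pow_orderOf_eq_one]
    rwa [hsq, one_mul, mul_inv_eq_one, mul_inv_eq_iff_eq_mul] at hrel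
  refine isMulCommutative_of_closure_eq_top hgen ?_
  rintro x (rfl | rfl | rfl | rfl) y (rfl | rfl | rfl | rfl) <;> simp only [hcentral, hcomm]

end Group

section Dicyclic

open QuaternionGroup

variable {n : ℕ}

theorem quaternionGroup_eq_a_of_orderOf_eq_two [NeZero n] {g : QuaternionGroup n}
    (hg : orderOf g = 2) : g = a n := by
  obtain ⟨hsq, hne⟩ := orderOf_eq_prime_iff.mp hg
  cases g with
  | a i =>
    have hi : i ≠ 0 := by
      rintro rfl
      exact hne a_zero
    have hneg : -i = i := by
      rw [pow_two, a_mul_a, one_def, a.injEq] at hsq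
      exact neg_eq_of_add_eq_zero_left hsq
    have hval : i.val = n := by
      have := ((ZMod.neg_eq_self_iff i).mp hneg).resolve_left hi
      lia
    exact congrArg a ((ZMod.natCast_zmod_val i).symm.trans (congrArg Nat.cast hval))
  | xa i => simp [orderOf_xa] at hg

theorem not_isMulCommutative_quaternionGroup (hn : n ≠ 1) :
    ¬ IsMulCommutative (QuaternionGroup n) := by
  intro hcomm
  have hxa : (xa 1 : QuaternionGroup n) = xa (-1) := by
    simpa using mul_comm' (xa 0 : QuaternionGroup n) (a 1)
  have htwo : ((2 : ℕ) : ZMod (2 * n)) = 0 := by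
    rw [Nat.cast_two, ← one_add_one_eq_two (R := ZMod (2 * n))]
    exact eq_neg_iff_add_eq_zero.mp (xa.inj hxa)
  have hdvd : 2 * n ∣ 2 * 1 := (ZMod.natCast_eq_zero_iff _ _).mp htwo
  exact hn (Nat.dvd_one.mp (Nat.dvd_of_mul_dvd_mul_left two_pos hdvd))

theorem dicyclic12_not_one_two_two_generated_general (hn : 2 ≤ n) :
    ¬ IsOneTwoTwoGenerated (QuaternionGroup n) := by
  have : NeZero n := ⟨by lia⟩
  intro hgen
  refine not_isMulCommutative_quaternionGroup (by lia) (hgen.isMulCommutative fun x y hx hy ↦ ?_)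
  rw [quaternionGroup_eq_a_of_orderOf_eq_two hx, quaternionGroup_eq_a_of_orderOf_eq_two hy]

end Dicyclic

/-- The dicyclic group of order 12 is not `(1 | 2,2)`-generated. -/
theorem dicyclic12_not_one_two_two_generated :
    ¬ ∃ l₁ l₂ h₁ h₂ : QuaternionGroup 3,
        orderOf l₁ = 2 ∧ orderOf l₂ = 2 ∧
        l₁ * l₂ * (h₁ * h₂ * h₁⁻¹ * h₂⁻¹) = 1 ∧
        Subgroup.closure ({l₁, l₂, h₁, h₂} : Set (QuaternionGroup 3)) = ⊤ :=
  dicyclic12_not_one_two_two_generated_general (by norm_num)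
end

section
/- The symmetric group S₄ on 4 letters is not (1 | 2)-generated; that is, there do not exist permutations h₁, h₂ generating S₄ such that the commutator h₁h₂h₁⁻¹h₂⁻¹ has order 2. -/
/-!
If `h₁, h₂` generate `G` and `⁅h₁, h₂⁆` lies in a normal subgroup `N`, then the images of `h₁, h₂`
in `G ⧸ N` commute and generate, so `G ⧸ N` is abelian and `N` contains the whole commutator
subgroup. In `S₄` the commutator subgroup is `A₄`, and the elements of `A₄` of `2`-power order form
the Klein four-group, which is normal in `S₄` but too small to contain `A₄`. Hence the commutator of
a generating pair is a three-cycle and has order `3`.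
-/

section Generators

open scoped commutatorElement

variable {G : Type*} [Group G] {N : Subgroup G} [N.Normal]

theorem commutator_le_of_closure_eq_top {S : Set G} (hS : Subgroup.closure S = ⊤)
    (hN : ∀ a ∈ S, ∀ b ∈ S, ⁅a, b⁆ ∈ N) : commutator G ≤ N := by
  let π := QuotientGroup.mk' N
  have hπS : Subgroup.closure (π '' S) = ⊤ := by
    rw [← MonoidHom.map_closure, hS]
    exact Subgroup.map_top_of_surjective π (QuotientGroup.mk'_surjective N)
  have hcomm : ∀ x ∈ π '' S, ∀ y ∈ π '' S, x * y = y * x := by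
    rintro _ ⟨a, ha, rfl⟩ _ ⟨b, hb, rfl⟩
    rw [← commutatorElement_eq_one_iff_mul_comm, ← map_commutatorElement]
    exact (QuotientGroup.eq_one_iff _).mpr (hN a ha b hb)
  have hclosure := Subgroup.isMulCommutative_closure hcomm
  rw [hπS, ← Subgroup.commutator_self_eq_bot_iff, ← commutator_def, commutator_eq_bot_iff]
    at hclosure
  exact Subgroup.Normal.quotient_commutative_iff_commutator_le.mp hclosure

theorem commutator_le_of_closure_pair_eq_top {a b : G} (hab : Subgroup.closure {a, b} = ⊤)
    (hN : ⁅a, b⁆ ∈ N) : commutator G ≤ N := by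
  refine commutator_le_of_closure_eq_top hab ?_
  rintro x (rfl | rfl) y (rfl | rfl)
  · simp
  · exact hN
  · rw [← commutatorElement_inv]
    exact N.inv_mem hN
  · simp

end Generators

section Perm

open Equiv.Perm
open scoped commutatorElement

variable {α : Type*} [Fintype α] [DecidableEq α]

theorem commutator_perm_eq_alternatingGroup :
    commutator (Equiv.Perm α) = alternatingGroup α := by
  refine le_antisymm alternatingGroup.commutator_perm_le ?_
  rw [← closure_three_cycles_eq_alternating, commutator_eq_closure]
  refine Subgroup.closure_mono fun g (hg : g.IsThreeCycle) ↦ ?_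
  have hg_sq : (g ^ 2).IsThreeCycle := sq g ▸ hg.isThreeCycle_sq
  exact mem_commutatorSet_of_isConj_sq _
    (isConj_of_cycleType_eq (hg.cycleType.trans hg_sq.cycleType.symm))

theorem isThreeCycle_of_not_orderOf_dvd_four (hα : Nat.card α ≤ 4) {g : Equiv.Perm α}
    (hg : ¬ orderOf g ∣ 4) : g.IsThreeCycle := by
  have hsum : g.cycleType.sum ≤ 4 := by
    rw [sum_cycleType]
    exact g.support.card_le_univ.trans (Nat.card_eq_fintype_card (α := α) ▸ hα)
  obtain ⟨k, hk, hk4⟩ : ∃ k ∈ g.cycleType, ¬ k ∣ 4 := by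
    simpa [← lcm_cycleType, Multiset.lcm_dvd] using hg
  have hk_two_le : 2 ≤ k := two_le_of_mem_cycleType hk
  have hk_le : k ≤ 4 := (Multiset.le_sum_of_mem hk).trans hsum
  obtain rfl : k = 3 := by
    interval_cases k <;> simp_all
  obtain ⟨t, ht⟩ := Multiset.exists_cons_of_mem hk
  have ht_zero : t = 0 := by
    refine Multiset.eq_zero_of_forall_notMem fun m hm ↦ ?_
    have hm_two_le : 2 ≤ m := two_le_of_mem_cycleType (ht ▸ Multiset.mem_cons_of_mem hm)
    have hm_le : m ≤ t.sum := Multiset.le_sum_of_mem hm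
    rw [ht, Multiset.sum_cons] at hsum
    omega
  rw [IsThreeCycle, ht, ht_zero, Multiset.cons_zero]

theorem mem_map_kleinFour_of_orderOf_dvd_two_pow (hα : Nat.card α = 4) {g : Equiv.Perm α} {n : ℕ}
    (hgA : g ∈ alternatingGroup α) (hg : orderOf g ∣ 2 ^ n) :
    g ∈ (alternatingGroup.kleinFour α).map (alternatingGroup α).subtype := by
  refine ⟨⟨g, hgA⟩, ?_, rfl⟩
  rw [alternatingGroup.coe_kleinFour_of_card_eq_four hα]
  simpa using alternatingGroup.mem_kleinFour_of_order_two_pow hα hgA hg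

theorem not_alternatingGroup_le_map_kleinFour (hα : Nat.card α = 4) :
    ¬ alternatingGroup α ≤ (alternatingGroup.kleinFour α).map (alternatingGroup α).subtype := by
  intro hle
  have hcard := Subgroup.card_le_of_le hle
  rw [Subgroup.card_subtype, alternatingGroup.card_of_card_eq_four hα,
    alternatingGroup.kleinFour_card_of_card_eq_four hα] at hcard
  omega

theorem S4_not_one_two_generated_general (hα : Nat.card α = 4) {h₁ h₂ : Equiv.Perm α}
    (hgen : Subgroup.closure {h₁, h₂} = ⊤) : ⁅h₁, h₂⁆.IsThreeCycle := by
  refine isThreeCycle_of_not_orderOf_dvd_four hα.le fun hord ↦ ?_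
  have hchar := alternatingGroup.characteristic_kleinFour hα
  have hA : ⁅h₁, h₂⁆ ∈ alternatingGroup α := by
    rw [← commutator_perm_eq_alternatingGroup]
    exact Subgroup.commutator_mem_commutator (Subgroup.mem_top h₁) (Subgroup.mem_top h₂)
  have hV := mem_map_kleinFour_of_orderOf_dvd_two_pow (n := 2) hα hA hord
  exact not_alternatingGroup_le_map_kleinFour hα
    (commutator_perm_eq_alternatingGroup.ge.trans (commutator_le_of_closure_pair_eq_top hgen hV))

end Perm

/-- The symmetric group `S₄` is not `(1 | 2)`-generated. -/
theorem S4_not_one_two_generated :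
    ¬ ∃ h₁ h₂ : Equiv.Perm (Fin 4),
        Subgroup.closure ({h₁, h₂} : Set (Equiv.Perm (Fin 4))) = ⊤ ∧
        orderOf (h₁ * h₂ * h₁⁻¹ * h₂⁻¹) = 2 := by
  rintro ⟨h₁, h₂, hgen, hord⟩
  have hthree := (S4_not_one_two_generated_general (by simp) hgen).orderOf
  rw [commutatorElement_def, hord] at hthree
  omega
end
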